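/- There is an isomorphism of k-algebras from k[x,y,z,t]/(z² − 4xy − 4t³) onto the center of A, sending x ↦ a², y ↦ b², z ↦ ab + ba, t ↦ c²; in particular the center of A is the coordinate ring of the compound Du Val hypersurface singularity z² − 4xy = 4t³. -/

import Mathlib

/-- The relations `ac + ca = 0`, `bc + cb = 0`, `ab - ba - 2c³ = 0` on the free
associative algebra `k⟨a,b,c⟩`; quotienting by the ring congruence they generate
is the quotient by the two-sided ideal generated by these three elements. -/
inductive CdvRel (k : Type*) [Field k] :
    FreeAlgebra k (Fin 3) → FreeAlgebra k (Fin 3) → Prop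
  | ac : CdvRel k (FreeAlgebra.ι k 0 * FreeAlgebra.ι k 2
      + FreeAlgebra.ι k 2 * FreeAlgebra.ι k 0) 0
  | bc : CdvRel k (FreeAlgebra.ι k 1 * FreeAlgebra.ι k 2
      + FreeAlgebra.ι k 2 * FreeAlgebra.ι k 1) 0
  | ab : CdvRel k (FreeAlgebra.ι k 0 * FreeAlgebra.ι k 1
      - FreeAlgebra.ι k 1 * FreeAlgebra.ι k 0 - 2 * FreeAlgebra.ι k 2 ^ 3) 0

/-- The algebra `A = k⟨a,b,c⟩/(ac + ca, bc + cb, ab - ba - 2c³)`. -/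
abbrev CdvAlgebra (k : Type*) [Field k] : Type _ := RingQuot (CdvRel k)

/-- The images of the generators `a`, `b`, `c` in `A`. -/
noncomputable def cdvGen (k : Type*) [Field k] (i : Fin 3) : CdvAlgebra k :=
  RingQuot.mkAlgHom k (CdvRel k) (FreeAlgebra.ι k i)

namespace CdvAux

set_option linter.unusedSimpArgs false
set_option linter.flexible false

open MvPolynomial

section
variable (k : Type*) [Field k]

abbrev P := MvPolynomial (Fin 3) k
abbrev V := Fin 8 → P k

noncomputable def La : V k →ₗ[P k] V k where
  toFun v := ![X 0 * v 1, v 0, X 0 * v 3, v 2, X 0 * v 5, v 4, X 0 * v 7, v 6]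
  map_add' u v := by ext1 i; fin_cases i <;> simp <;> ring
  map_smul' r v := by ext1 i; fin_cases i <;> simp <;> ring

noncomputable def Lc : V k →ₗ[P k] V k where
  toFun v := ![X 2 * v 4, - (X 2 * v 5), - (X 2 * v 6), X 2 * v 7, v 0, - v 1, - v 2, v 3]
  map_add' u v := by ext1 i; fin_cases i <;> simp <;> ring
  map_smul' r v := by ext1 i; fin_cases i <;> simp <;> ring

noncomputable def Lb : V k →ₗ[P k] V k where
  toFun v := ![X 1 * v 2 - 2 * X 2 ^ 2 * v 5, X 1 * v 3, v 0 + 2 * X 2 ^ 2 * v 7, v 1,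
    X 1 * v 6 - 2 * X 2 * v 1, X 1 * v 7, v 4 + 2 * X 2 * v 3, v 5]
  map_add' u v := by ext1 i; fin_cases i <;> simp <;> ring
  map_smul' r v := by ext1 i; fin_cases i <;> simp <;> ring

/-- A copy of the algebra, so that instances are found through one path. -/
def B : Type _ := CdvAlgebra k
noncomputable instance : Ring (B k) := inferInstanceAs (Ring (CdvAlgebra k))
noncomputable instance : Algebra k (B k) := inferInstanceAs (Algebra k (CdvAlgebra k))

noncomputable def mkB : FreeAlgebra k (Fin 3) →ₐ[k] B k := RingQuot.mkAlgHom k (CdvRel k)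
lemma mkB_surj : Function.Surjective (mkB k) := RingQuot.mkAlgHom_surjective k (CdvRel k)
lemma mkB_rel {x y} (h : CdvRel k x y) : mkB k x = mkB k y := RingQuot.mkAlgHom_rel k h
noncomputable def gen (i : Fin 3) : B k := mkB k (FreeAlgebra.ι k i)
noncomputable def liftB {A : Type*} [Ring A] [Algebra k A]
    (f : {f : FreeAlgebra k (Fin 3) →ₐ[k] A // ∀ ⦃x y⦄, CdvRel k x y → f x = f y}) : B k →ₐ[k] A :=
  RingQuot.liftAlgHom k f
lemma liftB_mk {A : Type*} [Ring A] [Algebra k A]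
    (f : {f : FreeAlgebra k (Fin 3) →ₐ[k] A // ∀ ⦃x y⦄, CdvRel k x y → f x = f y}) (x) :
    liftB k f (mkB k x) = f.1 x :=
  RingQuot.liftAlgHom_mkAlgHom_apply k f.1 f.2 x

noncomputable def rho : B k →ₐ[k] Module.End (P k) (V k) :=
  liftB k ⟨FreeAlgebra.lift k ![La k, Lb k, Lc k], by
    intro x y h
    cases h
    · refine LinearMap.ext fun v => ?_
      ext1 i
      fin_cases i <;> simp [La, Lc] <;> ring
    · refine LinearMap.ext fun v => ?_
      ext1 i
      fin_cases i <;> simp [Lb, Lc] <;> ring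
    · refine LinearMap.ext fun v => ?_
      ext1 i
      fin_cases i <;> simp [La, Lb, Lc, pow_succ, two_mul] <;> ring⟩

noncomputable abbrev a : B k := gen k 0
noncomputable abbrev b : B k := gen k 1
noncomputable abbrev c : B k := gen k 2

lemma rho_a : rho k (a k) = La k := by simp [rho, gen, liftB_mk]
lemma rho_b : rho k (b k) = Lb k := by simp [rho, gen, liftB_mk]
lemma rho_c : rho k (c k) = Lc k := by simp [rho, gen, liftB_mk]

lemma hac : a k * c k = - (c k * a k) := by
  have := mkB_rel k (CdvRel.ac (k := k))
  simp only [map_add, map_mul, map_zero] at this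
  exact eq_neg_of_add_eq_zero_left this
lemma hbc : b k * c k = - (c k * b k) := by
  have := mkB_rel k (CdvRel.bc (k := k))
  simp only [map_add, map_mul, map_zero] at this
  exact eq_neg_of_add_eq_zero_left this
lemma hba : b k * a k = a k * b k - 2 * c k ^ 3 := by
  have := mkB_rel k (CdvRel.ab (k := k))
  simp only [map_sub, map_pow, map_mul, map_zero, map_ofNat] at this
  have h : a k * b k - b k * a k - 2 * c k ^ 3 = 0 := this
  rw [sub_sub, sub_eq_zero] at h
  rw [h]; abel
lemma hca : c k * a k = - (a k * c k) := by rw [hac, neg_neg]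
lemma hcb : c k * b k = - (b k * c k) := by rw [hbc, neg_neg]

lemma gen_induct {p : B k → Prop} (hk : ∀ r, p (algebraMap k _ r))
    (ha : p (a k)) (hb : p (b k)) (hc : p (c k))
    (hadd : ∀ x y, p x → p y → p (x + y)) (hmul : ∀ x y, p x → p y → p (x * y)) (m) : p m := by
  obtain ⟨m, rfl⟩ := mkB_surj k m
  induction m using FreeAlgebra.induction with
  | grade0 r => rw [AlgHom.commutes]; exact hk r
  | grade1 i => fin_cases i <;> assumption
  | mul x y hx hy => rw [map_mul]; exact hmul _ _ hx hy
  | add x y hx hy => rw [map_add]; exact hadd _ _ hx hy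

lemma mem_center {z : B k} (ha : a k * z = z * a k) (hb : b k * z = z * b k)
    (hc : c k * z = z * c k) : z ∈ Subalgebra.center k (B k) := by
  rw [Subalgebra.mem_center_iff]
  refine gen_induct k (fun r => Algebra.commutes r z) ha hb hc ?_ ?_
  · intro x y hx hy; rw [add_mul, mul_add, hx, hy]
  · intro x y hx hy; rw [mul_assoc, hy, ← mul_assoc, hx, mul_assoc]

lemma hca' (w : B k) : c k * (a k * w) = - (a k * (c k * w)) := by
  rw [← mul_assoc, hca, neg_mul, mul_assoc]
lemma hcb' (w : B k) : c k * (b k * w) = - (b k * (c k * w)) := by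
  rw [← mul_assoc, hcb, neg_mul, mul_assoc]
lemma hba1 : b k * a k = a k * b k - (c k * (c k * c k) + c k * (c k * c k)) := by
  rw [hba]; simp only [two_mul, pow_succ, pow_zero, one_mul, mul_assoc]
lemma hba' (w : B k) : b k * (a k * w) = a k * (b k * w) -
    (c k * (c k * (c k * w)) + c k * (c k * (c k * w))) := by
  rw [← mul_assoc, hba1]; simp only [sub_mul, add_mul, mul_assoc]

lemma ha2 : a k ^ 2 ∈ Subalgebra.center k (B k) := by
  apply mem_center <;>
  simp only [pow_two, mul_assoc, hca, hcb, hba1, hca', hcb', hba', mul_add, mul_sub, mul_neg,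
    neg_mul, neg_neg] <;> abel
lemma hb2 : b k ^ 2 ∈ Subalgebra.center k (B k) := by
  apply mem_center <;>
  simp only [pow_two, mul_assoc, hca, hcb, hba1, hca', hcb', hba', mul_add, mul_sub, mul_neg,
    neg_mul, neg_neg, sub_mul, add_mul] <;> abel
lemma hc2 : c k ^ 2 ∈ Subalgebra.center k (B k) := by
  apply mem_center <;>
  simp only [pow_two, mul_assoc, hca, hcb, hba1, hca', hcb', hba', mul_add, mul_sub, mul_neg,
    neg_mul, neg_neg, sub_mul, add_mul]
lemma hz : a k * b k + b k * a k ∈ Subalgebra.center k (B k) := by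
  apply mem_center <;>
  simp only [mul_assoc, hca, hcb, hba1, hca', hcb', hba', mul_add, mul_sub, mul_neg,
    neg_mul, neg_neg, sub_mul, add_mul] <;> abel
lemma hrel : (a k * b k + b k * a k) ^ 2 - 4 * a k ^ 2 * b k ^ 2 - 4 * (c k ^ 2) ^ 3 = 0 := by
  have h4 : (4 : B k) = 1 + 1 + 1 + 1 := by norm_num
  simp only [h4, pow_succ, pow_zero, one_mul, mul_assoc, hca, hcb, hba1, hca', hcb', hba',
    mul_add, mul_sub, mul_neg, neg_mul, neg_neg, sub_mul, add_mul]
  abel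

noncomputable def theta : P k →ₐ[k] B k :=
  (Subalgebra.center k (B k)).val.comp
    (aeval ![⟨a k ^ 2, ha2 k⟩, ⟨b k ^ 2, hb2 k⟩, ⟨c k ^ 2, hc2 k⟩])

lemma theta_0 : theta k (X 0) = a k * a k := by simp [theta, pow_two]
lemma theta_1 : theta k (X 1) = b k * b k := by simp [theta, pow_two]
lemma theta_2 : theta k (X 2) = c k * c k := by simp [theta, pow_two]

lemma tcomm (m : B k) (p : P k) : m * theta k p = theta k p * m :=
  Subalgebra.mem_center_iff.1 (Subtype.prop _) m
lemma tcomm' (m : B k) (p : P k) (w) : m * (theta k p * w) = theta k p * (m * w) := by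
  rw [← mul_assoc, tcomm, mul_assoc]

noncomputable def chi (v : V k) : B k :=
  theta k (v 0) + theta k (v 1) * a k + theta k (v 2) * b k + theta k (v 3) * (a k * b k)
  + theta k (v 4) * c k + theta k (v 5) * (a k * c k) + theta k (v 6) * (b k * c k)
  + theta k (v 7) * (a k * (b k * c k))

lemma chi_La (v : V k) : chi k (La k v) = a k * chi k v := by
  simp [chi, La, theta_0, theta_1, theta_2, mul_add, tcomm k (a k), tcomm' k (a k), mul_assoc]
  abel

lemma chi_Lb (v : V k) : chi k (Lb k v) = b k * chi k v := by
  simp [chi, Lb, theta_0, theta_1, theta_2, tcomm k (a k), tcomm' k (a k), mul_assoc,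
    tcomm k (b k), tcomm' k (b k), tcomm k (c k), tcomm' k (c k), two_mul, pow_two,
    hca, hcb, hba1, hca', hcb', hba', mul_add, mul_sub, sub_mul, add_mul]
  abel

lemma chi_Lc (v : V k) : chi k (Lc k v) = c k * chi k v := by
  simp [chi, Lc, theta_0, theta_1, theta_2, tcomm k (a k), tcomm' k (a k), mul_assoc,
    tcomm k (b k), tcomm' k (b k), tcomm k (c k), tcomm' k (c k), two_mul, pow_two,
    hca, hcb, hba1, hca', hcb', hba', mul_add, mul_sub, sub_mul, add_mul]
  abel

noncomputable def Rc (v : V k) : V k :=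
  ![X 2 * v 4, X 2 * v 5, X 2 * v 6, X 2 * v 7, v 0, v 1, v 2, v 3]

noncomputable def Ra (v : V k) : V k :=
  ![X 0 * v 1 + 2 * X 2 ^ 2 * v 6, v 0 + 2 * X 2 ^ 2 * v 7, X 0 * v 3, v 2,
    - (2 * X 2 * v 2) - X 0 * v 5, - v 4 - 2 * X 2 * v 3, - (X 0 * v 7), - v 6]

lemma chi_Rc (v : V k) : chi k (Rc k v) = chi k v * c k := by
  simp [chi, Rc, theta_0, theta_1, theta_2, tcomm k (a k), tcomm' k (a k), mul_assoc,
    tcomm k (b k), tcomm' k (b k), tcomm k (c k), tcomm' k (c k), two_mul, pow_two,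
    hca, hcb, hba1, hca', hcb', hba', mul_add, mul_sub, sub_mul, add_mul]
  abel

lemma chi_Ra (v : V k) : chi k (Ra k v) = chi k v * a k := by
  simp [chi, Ra, theta_0, theta_1, theta_2, tcomm k (a k), tcomm' k (a k), mul_assoc,
    tcomm k (b k), tcomm' k (b k), tcomm k (c k), tcomm' k (c k), two_mul, pow_two,
    hca, hcb, hba1, hca', hcb', hba', mul_add, mul_sub, sub_mul, add_mul]
  abel

noncomputable def e0 : V k := ![1, 0, 0, 0, 0, 0, 0, 0]

lemma chi_e0 : chi k (e0 k) = 1 := by simp [chi, e0]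

lemma chi_add (u v : V k) : chi k (u + v) = chi k u + chi k v := by
  simp [chi, add_mul]; abel

lemma chi_smul (p : P k) (v : V k) : chi k (p • v) = theta k p * chi k v := by
  simp [chi, mul_add, mul_assoc]

lemma chi_rho (m : B k) : ∀ v, chi k (rho k m v) = m * chi k v := by
  refine gen_induct k (p := fun m => ∀ v, chi k (rho k m v) = m * chi k v) ?_ ?_ ?_ ?_ ?_ ?_ m
  · intro r v
    have : rho k (algebraMap k _ r) v = (algebraMap k (P k) r) • v := by
      rw [AlgHom.commutes, Module.algebraMap_end_apply, algebraMap_smul]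
    rw [this, chi_smul, AlgHom.commutes]
  · intro v; rw [rho_a, chi_La]
  · intro v; rw [rho_b, chi_Lb]
  · intro v; rw [rho_c, chi_Lc]
  · intro x y hx hy v; rw [map_add, LinearMap.add_apply, chi_add, hx, hy, add_mul]
  · intro x y hx hy v; rw [map_mul, Module.End.mul_apply, hx, hy, mul_assoc]

lemma chi_surj (m : B k) : ∃ v, chi k v = m :=
  ⟨rho k m (e0 k), by rw [chi_rho, chi_e0, mul_one]⟩

lemma rho_theta (p : P k) : rho k (theta k p) = algebraMap (P k) _ p := by
  have : (rho k).comp (theta k) = IsScalarTower.toAlgHom k (P k) (Module.End (P k) (V k)) := by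
    apply MvPolynomial.algHom_ext
    intro j
    refine LinearMap.ext fun v => ?_
    ext1 i
    fin_cases j
    · fin_cases i <;> simp [theta_0, rho_a, La]
    · fin_cases i <;> simp [theta_1, rho_b, Lb] <;> ring
    · fin_cases i <;> simp [theta_2, rho_c, Lc]
  exact DFunLike.congr_fun this p

lemma rho_chi (v : V k) : rho k (chi k v) (e0 k) = v := by
  ext1 i
  fin_cases i <;> simp [chi, rho_theta, rho_a, rho_b, rho_c, La, Lb, Lc, e0]

lemma chi_inj : Function.Injective (chi k) :=
  fun u v h => by rw [← rho_chi k u, h, rho_chi k v]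

abbrev P4 := MvPolynomial (Fin 4) k
noncomputable abbrev I4 : Ideal (P4 k) :=
  Ideal.span {(X 2 ^ 2 - 4 * X 0 * X 1 - 4 * X 3 ^ 3 : MvPolynomial (Fin 4) k)}

noncomputable def Phi0 : P4 k →ₐ[k] Subalgebra.center k (B k) :=
  aeval ![⟨a k ^ 2, ha2 k⟩, ⟨b k ^ 2, hb2 k⟩, ⟨a k * b k + b k * a k, hz k⟩, ⟨c k ^ 2, hc2 k⟩]

lemma Phi0_0 : (Phi0 k (X 0) : B k) = a k ^ 2 := by simp [Phi0]
lemma Phi0_1 : (Phi0 k (X 1) : B k) = b k ^ 2 := by simp [Phi0]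
lemma Phi0_2 : (Phi0 k (X 2) : B k) = a k * b k + b k * a k := by simp [Phi0]
lemma Phi0_3 : (Phi0 k (X 3) : B k) = c k ^ 2 := by simp [Phi0]

lemma Phi0_ker (f : P4 k) (hf : f ∈ I4 k) : Phi0 k f = 0 := by
  obtain ⟨g, rfl⟩ := Ideal.mem_span_singleton'.1 hf
  rw [map_mul]
  have : Phi0 k (X 2 ^ 2 - 4 * X 0 * X 1 - 4 * X 3 ^ 3) = 0 := by
    apply Subtype.ext
    have h := hrel k
    rw [← Phi0_0, ← Phi0_1, ← Phi0_2, ← Phi0_3] at h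
    simp only [map_sub, map_mul, map_pow, map_ofNat]
    exact h
  rw [this, mul_zero]

noncomputable def iot : P k →ₐ[k] P4 k := rename ![0, 1, 3]

lemma Phi0_iot (p : P k) : (Phi0 k (iot k p) : B k) = theta k p := by
  have : ((Subalgebra.center k (B k)).val.comp (Phi0 k)).comp (iot k) = theta k := by
    apply MvPolynomial.algHom_ext
    intro j
    fin_cases j <;> simp [iot, Phi0, theta]
  exact DFunLike.congr_fun this p

lemma Phi0_nf (p q : P k) : (Phi0 k (iot k p + iot k q * X 2) : B k) =
    chi k ![p, 0, 0, 2 * q, - (2 * X 2 * q), 0, 0, 0] := by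
  have : (Phi0 k (iot k p + iot k q * X 2) : B k) =
      theta k p + theta k q * (a k * b k + b k * a k) := by
    rw [← Phi0_iot, ← Phi0_iot, ← Phi0_2, map_add, map_mul]; rfl
  rw [this]
  simp [chi, theta_2, two_mul, hba1, mul_add, add_mul, mul_sub, mul_assoc,
    tcomm k (c k), tcomm' k (c k)]
  abel

lemma reduce (F : P4 k) : ∃ p q, F - (iot k p + iot k q * X 2) ∈ I4 k := by
  have hr : (X 2 ^ 2 - 4 * X 0 * X 1 - 4 * X 3 ^ 3 : P4 k) ∈ I4 k :=
    Ideal.subset_span rfl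
  have i0 : iot k (X 0) = X 0 := by simp [iot]
  have i1 : iot k (X 1) = X 1 := by simp [iot]
  have i2 : iot k (X 2) = X 3 := by simp [iot]
  induction F using MvPolynomial.induction_on with
  | C r => exact ⟨C r, 0, by simp [iot]⟩
  | add f g hf hg =>
    obtain ⟨p, q, h⟩ := hf
    obtain ⟨p', q', h'⟩ := hg
    refine ⟨p + p', q + q', ?_⟩
    convert Ideal.add_mem _ h h' using 1
    simp only [map_add]; ring
  | mul_X f j hf =>
    obtain ⟨p, q, h⟩ := hf
    have h' := Ideal.mul_mem_right (X j) _ h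
    fin_cases j
    · refine ⟨p * X 0, q * X 0, ?_⟩
      convert h' using 1
      simp only [map_mul, i0, Fin.zero_eta]; ring
    · refine ⟨p * X 1, q * X 1, ?_⟩
      convert h' using 1
      simp only [map_mul, i1, Fin.mk_one]; ring
    · refine ⟨(4 * X 0 * X 1 + 4 * X 2 ^ 3) * q, p, ?_⟩
      convert Ideal.add_mem _ h' (Ideal.mul_mem_left _ (iot k q) hr) using 1
      simp only [map_mul, map_add, map_pow, map_ofNat, i0, i1, i2, Fin.reduceFinMk]; ring
    · refine ⟨p * X 2, q * X 2, ?_⟩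
      convert h' using 1
      simp only [map_mul, i2, Fin.reduceFinMk]; ring

noncomputable def Phi : (P4 k ⧸ I4 k) →ₐ[k] Subalgebra.center k (B k) :=
  Ideal.Quotient.liftₐ _ (Phi0 k) (Phi0_ker k)

lemma Phi_mk (f : P4 k) : Phi k (Ideal.Quotient.mk _ f) = Phi0 k f := rfl

lemma Phi_inj [CharZero k] : Function.Injective (Phi k) := by
  rw [injective_iff_map_eq_zero]
  intro f hf
  obtain ⟨F, rfl⟩ := Ideal.Quotient.mk_surjective f
  rw [Phi_mk] at hf
  obtain ⟨p, q, h⟩ := reduce k F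
  have h1 := Phi0_ker k _ h
  rw [map_sub, hf, zero_sub, neg_eq_zero] at h1
  have h2 := Phi0_nf k p q
  rw [h1] at h2
  have h3 : chi k (0 : V k) = chi k ![p, 0, 0, 2 * q, - (2 * X 2 * q), 0, 0, 0] := by
    rw [← h2]; simp [chi]
  have h4 := chi_inj k h3
  have hp : p = 0 := by simpa using (congrFun h4 0).symm
  have hq : q = 0 := by simpa using (congrFun h4 3).symm
  rw [Ideal.Quotient.eq_zero_iff_mem]
  simpa [hp, hq] using h

lemma self_neg [CharZero k] {p : P k} (h : -p = p) : p = 0 := by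
  have h2 : (2 : P k) * p = 0 := by linear_combination -h
  simpa using h2

lemma Phi_surj [CharZero k] : Function.Surjective (Phi k) := by
  rintro ⟨m, hm⟩
  obtain ⟨v, rfl⟩ := chi_surj k m
  rw [Subalgebra.mem_center_iff] at hm
  have hc := hm (c k)
  have ha := hm (a k)
  rw [← chi_Lc, ← chi_Rc] at hc
  rw [← chi_La, ← chi_Ra] at ha
  have hc := chi_inj k hc
  have ha := chi_inj k ha
  have v1 : v 1 = 0 := self_neg k (by simpa [Lc, Rc] using congrFun hc 5)
  have v2 : v 2 = 0 := self_neg k (by simpa [Lc, Rc] using congrFun hc 6)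
  have v5 : v 5 = 0 := by
    have h : -(X 2 * v 5) = X 2 * v 5 := by simpa [Lc, Rc] using congrFun hc 1
    simpa using self_neg k h
  have v6 : v 6 = 0 := by
    have h : -(X 2 * v 6) = X 2 * v 6 := by simpa [Lc, Rc] using congrFun hc 2
    simpa using self_neg k h
  have v7 : v 7 = 0 := by
    have h : X 0 * v 7 = -(X 0 * v 7) := by simpa [La, Ra] using congrFun ha 6
    simpa using self_neg k h.symm
  have v4 : v 4 = - (X 2 * v 3) := by
    have h : v 4 = - v 4 - 2 * X 2 * v 3 := by simpa [La, Ra] using congrFun ha 5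
    have h2 : (2 : P k) * (v 4 + X 2 * v 3) = 0 := by linear_combination h
    have h3 : v 4 + X 2 * v 3 = 0 := by simpa using h2
    linear_combination h3
  have hh : (2 : P k) * C (1 / 2) = 1 := by
    rw [← map_ofNat (C : k →+* P k) 2, ← map_mul]; simp
  refine ⟨Ideal.Quotient.mk _ (iot k (v 0) + iot k (C (1 / 2) * v 3) * X 2), ?_⟩
  rw [Phi_mk]
  apply Subtype.ext
  rw [Phi0_nf]
  show chi k _ = chi k v
  congr 1
  ext1 i
  fin_cases i
  · simp
  · simp [v1]
  · simp [v2]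
  · show 2 * (C (1 / 2) * v 3) = v 3
    linear_combination v 3 * hh
  · show - (2 * X 2 * (C (1 / 2) * v 3)) = v 4
    rw [v4]
    linear_combination - (X 2 * v 3) * hh
  · simp [v5]
  · simp [v6]
  · simp [v7]

lemma main [CharZero k] : ∃ φ : (P4 k ⧸ I4 k) ≃ₐ[k] Subalgebra.center k (B k),
      (φ (Ideal.Quotient.mk _ (X 0)) : B k) = a k ^ 2 ∧
      (φ (Ideal.Quotient.mk _ (X 1)) : B k) = b k ^ 2 ∧
      (φ (Ideal.Quotient.mk _ (X 2)) : B k) = a k * b k + b k * a k ∧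
      (φ (Ideal.Quotient.mk _ (X 3)) : B k) = c k ^ 2 :=
  ⟨AlgEquiv.ofBijective (Phi k) ⟨Phi_inj k, Phi_surj k⟩,
    Phi0_0 k, Phi0_1 k, Phi0_2 k, Phi0_3 k⟩

end
end CdvAux

open MvPolynomial in
/-- There is a `k`-algebra isomorphism from `k[x,y,z,t]/(z² - 4xy - 4t³)` onto
the center of `A`, sending `x ↦ a²`, `y ↦ b²`, `z ↦ ab + ba`, `t ↦ c²`. -/
theorem cdv_center_iso (k : Type*) [Field k] [CharZero k] :
    ∃ φ : (MvPolynomial (Fin 4) k ⧸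
          Ideal.span {(X 2 ^ 2 - 4 * X 0 * X 1 - 4 * X 3 ^ 3 :
            MvPolynomial (Fin 4) k)}) ≃ₐ[k]
        Subalgebra.center k (CdvAlgebra k),
      (φ (Ideal.Quotient.mk _ (X 0)) : CdvAlgebra k) = cdvGen k 0 ^ 2 ∧
      (φ (Ideal.Quotient.mk _ (X 1)) : CdvAlgebra k) = cdvGen k 1 ^ 2 ∧
      (φ (Ideal.Quotient.mk _ (X 2)) : CdvAlgebra k)
        = cdvGen k 0 * cdvGen k 1 + cdvGen k 1 * cdvGen k 0 ∧
      (φ (Ideal.Quotient.mk _ (X 3)) : CdvAlgebra k) = cdvGen k 2 ^ 2 := by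
  exact CdvAux.main k
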